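/- Let N be a Nijenhuis operator on an n-Lie algebra (g, [·,…,·]) over a field K. Then the bracket [·,…,·]_N^{n−1} makes g into an n-Lie algebra (it is n-multilinear, skew-symmetric, and satisfies the Filippov identity), and N is a homomorphism from (g, [·,…,·]_N^{n−1}) to (g, [·,…,·]), i.e. N([x₁,…,xₙ]_N^{n−1}) = [Nx₁,…,Nxₙ] for all x₁,…,xₙ ∈ g. -/

import Mathlib

/-!
Put `B_j = [·,…,·]_N^j` and `A_j(x) = ∑_{|S| = j} b(N applied at the positions in S)`, so that
`A_j = B_j + N B_{j-1}` by definition of the nested brackets. In terms of a formal parameter `t`,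
`∑ t^j A_j(x) = b((1 + tN)x₁, …, (1 + tN)x_m)`, hence `∑ t^j B_j = (1 + tN)⁻¹ b((1 + tN)·, …)` is
the transport of `b` along the invertible operator `1 + tN`, and it satisfies the Filippov identity.
The Nijenhuis condition says that this series is a polynomial of degree at most `n`
(`nestedBracket_eq_zero`); comparing coefficients of `t^(2n)` gives the identity for `B_n`.

The argument is carried out on coefficients. With `F_k` the coefficient of `t^k` in the Filippov
defect, the identity for `b` gives `F_k + N F_{k-1} = 0` (from `sum_subsetBracket_nested` and
`sum_subsetBracket_filippov`), so all `F_k` vanish by induction (`nested_filippov`).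
Multiplication by `t` appears as the index shift `shiftSeq`, and that it may be moved from one
factor of a product to the other is `sum_shift_comm`.

Each `A_j`, and hence each `B_j`, is alternating: if `x i = x j`, the terms of `A_j(x)` cancel in
pairs under the action of the transposition `(i j)` on subsets.
-/

open Finset

/-- `b` is an `m`-multilinear skew-symmetric (alternating) map. -/
def IsSkewMultilinear (K : Type*) [Field K] {g W : Type*} [AddCommGroup g] [Module K g]
    [AddCommGroup W] [Module K W] {m : ℕ} (b : (Fin m → g) → W) : Prop :=
  (∀ (x : Fin m → g) (i : Fin m) (u v : g),
      b (Function.update x i (u + v)) = b (Function.update x i u) + b (Function.update x i v)) ∧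
  (∀ (x : Fin m → g) (i : Fin m) (c : K) (u : g),
      b (Function.update x i (c • u)) = c • b (Function.update x i u)) ∧
  (∀ (x : Fin m → g) (i j : Fin m), i ≠ j → x i = x j → b x = 0)

/-- The Filippov (fundamental) identity for an `(n+1)`-ary bracket. -/
def IsFilippov {g : Type*} [AddCommGroup g] {n : ℕ} (b : (Fin (n + 1) → g) → g) : Prop :=
  ∀ (x : Fin n → g) (y : Fin (n + 1) → g),
    b (Fin.snoc x (b y)) = ∑ i : Fin (n + 1), b (Function.update y i (b (Fin.snoc x (y i))))

/-- `b` is an `(n+1)`-Lie algebra bracket. -/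
def IsNLieBracket (K : Type*) [Field K] {g : Type*} [AddCommGroup g] [Module K g]
    {n : ℕ} (b : (Fin (n + 1) → g) → g) : Prop :=
  IsSkewMultilinear K b ∧ IsFilippov b

/-- The brackets `[x₁,…,x_m]_N^j` defined inductively from an `m`-ary bracket `b`
and a linear map `N`: `[x]_N^0 = b x` and
`[x]_N^{j+1} = ∑_{|S| = j+1} b(N applied at positions in S) − N ([x]_N^j)`. -/
def nestedBracket {K : Type*} [Field K] {g : Type*} [AddCommGroup g] [Module K g]
    {m : ℕ} (b : (Fin m → g) → g) (N : Module.End K g) : ℕ → (Fin m → g) → g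
  | 0 => b
  | j + 1 => fun x =>
      (∑ S ∈ Finset.powersetCard (j + 1) (Finset.univ : Finset (Fin m)),
          b (fun i => if i ∈ S then N (x i) else x i))
        - N (nestedBracket b N j x)

/-- `N` is a Nijenhuis operator on the `(n+1)`-Lie algebra `(g, b)`:
`[Nx₁,…,Nx_{n+1}] = N([x₁,…,x_{n+1}]_N^n)`. -/
def IsNijenhuis {K : Type*} [Field K] {g : Type*} [AddCommGroup g] [Module K g]
    {n : ℕ} (b : (Fin (n + 1) → g) → g) (N : Module.End K g) : Prop :=
  ∀ x : Fin (n + 1) → g, b (fun i => N (x i)) = N (nestedBracket b N n x)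

section NijenhuisProof

variable {K : Type*} [Field K] {g : Type*} [AddCommGroup g] [Module K g]

/-! ### Coefficients of the transported bracket -/

/-- `N` applied to the entries of the tuple `x` at the positions in `S`. -/
def applyOn {m : ℕ} (N : Module.End K g) (S : Finset (Fin m)) (x : Fin m → g) : Fin m → g :=
  fun i => if i ∈ S then N (x i) else x i

/-- The coefficient of `t^k` in `b((1 + tN)x₁, …, (1 + tN)x_m)`. -/
def subsetBracket {m : ℕ} (b : (Fin m → g) → g) (N : Module.End K g) (k : ℕ) (x : Fin m → g) : g :=
  ∑ S ∈ Finset.powersetCard k (Finset.univ : Finset (Fin m)), b (applyOn N S x)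

/-- The coefficient of `t^k` in `b((1 + tN)y₁, …, z, …, (1 + tN)y_m)`, with `z` in position `l`
left untouched by `N`. -/
def puncturedBracket {m : ℕ} (b : (Fin m → g) → g) (N : Module.End K g) (l : Fin m) (k : ℕ)
    (y : Fin m → g) (z : g) : g :=
  ∑ S ∈ Finset.powersetCard k ((Finset.univ : Finset (Fin m)).erase l),
    b (Function.update (applyOn N S y) l z)

/-- Multiplication by `t` on sequences of coefficients: the index is shifted by one and
the constant term is `0`. -/
def shiftSeq (f : ℕ → g) : ℕ → g
  | 0 => 0
  | k + 1 => f k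

/-! ### Index shifts in Cauchy products -/

lemma sum_shift_left (D : ℕ → ℕ → g) (k : ℕ) :
    ∑ p ∈ Finset.HasAntidiagonal.antidiagonal k, shiftSeq (fun i => D i p.2) p.1
      = shiftSeq (fun k' => ∑ p ∈ Finset.HasAntidiagonal.antidiagonal k', D p.1 p.2) k := by
  cases k with
  | zero => simp [shiftSeq]
  | succ k => simp [shiftSeq, Finset.Nat.sum_antidiagonal_succ]

lemma sum_shift_right (D : ℕ → ℕ → g) (k : ℕ) :
    ∑ p ∈ Finset.HasAntidiagonal.antidiagonal k, shiftSeq (fun j => D p.1 j) p.2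
      = shiftSeq (fun k' => ∑ p ∈ Finset.HasAntidiagonal.antidiagonal k', D p.1 p.2) k := by
  cases k with
  | zero => simp [shiftSeq]
  | succ k => simp [shiftSeq, Finset.Nat.sum_antidiagonal_succ']

/-- In a Cauchy product a factor `t` may be attached to either of the two series. -/
lemma sum_shift_comm (D : ℕ → ℕ → g) (k : ℕ) :
    ∑ p ∈ Finset.HasAntidiagonal.antidiagonal k, shiftSeq (fun i => D i p.2) p.1
      = ∑ p ∈ Finset.HasAntidiagonal.antidiagonal k, shiftSeq (fun j => D p.1 j) p.2 := by
  rw [sum_shift_left, sum_shift_right]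

lemma map_shiftSeq {W : Type*} [AddCommGroup W] (φ : g →+ W) (f : ℕ → g) (k : ℕ) :
    φ (shiftSeq f k) = shiftSeq (fun i => φ (f i)) k := by
  cases k <;> simp [shiftSeq]

lemma sum_shiftSeq {ι : Type*} (s : Finset ι) (f : ι → ℕ → g) (k : ℕ) :
    ∑ i ∈ s, shiftSeq (f i) k = shiftSeq (fun k' => ∑ i ∈ s, f i k') k := by
  cases k <;> simp [shiftSeq]

/-! ### Multilinearity and splitting at one position -/

section Arity

variable {m : ℕ} {b : (Fin m → g) → g} {N : Module.End K g}

/-- `A_k = B_k + N B_{k-1}`. -/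
lemma subsetBracket_eq (k : ℕ) (x : Fin m → g) :
    subsetBracket b N k x
      = nestedBracket b N k x + shiftSeq (fun j => N (nestedBracket b N j x)) k := by
  cases k with
  | zero =>
    have h : applyOn N ∅ x = x := by ext i; simp [applyOn]
    simp [subsetBracket, nestedBracket, shiftSeq, h]
  | succ k => exact (sub_add_cancel _ _).symm

lemma applyOn_update_of_notMem {S : Finset (Fin m)} {l : Fin m} (h : l ∉ S) (y : Fin m → g)
    (z : g) : applyOn N S (Function.update y l z) = Function.update (applyOn N S y) l z := by
  ext i
  by_cases hi : i = l
  · subst hi; simp [applyOn, h]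
  · simp [applyOn, hi]

lemma applyOn_insert_update {S : Finset (Fin m)} {l : Fin m} (y : Fin m → g)
    (z : g) : applyOn N (insert l S) (Function.update y l z)
      = Function.update (applyOn N S y) l (N z) := by
  ext i
  by_cases hi : i = l
  · subst hi; simp [applyOn]
  · simp [applyOn, hi]

/-- Sorting the subsets according to whether they contain `l`. -/
lemma sum_powersetCard_split (l : Fin m) (k : ℕ) (f : Finset (Fin m) → g) :
    ∑ S ∈ Finset.powersetCard k (Finset.univ : Finset (Fin m)), f S
      = ∑ S ∈ Finset.powersetCard k ((Finset.univ : Finset (Fin m)).erase l), f S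
        + shiftSeq (fun k' => ∑ S ∈ Finset.powersetCard k'
            ((Finset.univ : Finset (Fin m)).erase l), f (insert l S)) k := by
  cases k with
  | zero => simp [shiftSeq]
  | succ k =>
    have hl : l ∉ (Finset.univ : Finset (Fin m)).erase l := Finset.notMem_erase _ _
    conv_lhs => rw [← Finset.insert_erase (Finset.mem_univ l)]
    rw [Finset.powersetCard_succ_insert hl, Finset.sum_union, Finset.sum_image]
    · rfl
    · intro S hS T hT h
      have hS' : l ∉ S := fun h' => hl ((Finset.mem_powersetCard.1 hS).1 h')
      have hT' : l ∉ T := fun h' => hl ((Finset.mem_powersetCard.1 hT).1 h')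
      rw [← Finset.erase_insert hS', ← Finset.erase_insert hT', h]
    · rw [Finset.disjoint_left]
      intro S hS hS'
      obtain ⟨T, -, rfl⟩ := Finset.mem_image.1 hS'
      exact hl ((Finset.mem_powersetCard.1 hS).1 (Finset.mem_insert_self _ _))

lemma notMem_of_mem_erase {l : Fin m} {k : ℕ} {S : Finset (Fin m)}
    (hS : S ∈ Finset.powersetCard k ((Finset.univ : Finset (Fin m)).erase l)) : l ∉ S :=
  fun h' => Finset.notMem_erase _ _ ((Finset.mem_powersetCard.1 hS).1 h')

lemma subsetBracket_update (l : Fin m) (k : ℕ) (y : Fin m → g) (z : g) :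
    subsetBracket b N k (Function.update y l z)
      = puncturedBracket b N l k y z
        + shiftSeq (fun k' => puncturedBracket b N l k' y (N z)) k := by
  rw [subsetBracket, sum_powersetCard_split l]
  simp only [applyOn_insert_update]
  congr 1
  exact Finset.sum_congr rfl fun S hS => by rw [applyOn_update_of_notMem (notMem_of_mem_erase hS)]

lemma puncturedBracket_add (hb : IsSkewMultilinear K b) (l : Fin m) (k : ℕ) (y : Fin m → g)
    (u v : g) : puncturedBracket b N l k y (u + v)
      = puncturedBracket b N l k y u + puncturedBracket b N l k y v := by
  simp only [puncturedBracket, hb.1, Finset.sum_add_distrib]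

lemma puncturedBracket_smul (hb : IsSkewMultilinear K b) (l : Fin m) (k : ℕ) (y : Fin m → g)
    (c : K) (u : g) : puncturedBracket b N l k y (c • u)
      = c • puncturedBracket b N l k y u := by
  simp only [puncturedBracket, hb.2.1, Finset.smul_sum]

/-! ### Skew-symmetry of the nested brackets -/

/-- The alternating map underlying a skew-symmetric multilinear bracket. -/
def toAlternating (hb : IsSkewMultilinear K b) : g [⋀^Fin m]→ₗ[K] g where
  toFun := b
  map_update_add' := by
    intro _ x i u v
    convert hb.1 x i u v
  map_update_smul' := by
    intro _ x i c u
    convert hb.2.1 x i c u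
  map_eq_zero_of_eq' := fun x i j h hij => hb.2.2 x i j hij h

lemma IsSkewMultilinear.map_swap (hb : IsSkewMultilinear K b) (x : Fin m → g) {i j : Fin m}
    (hij : i ≠ j) : b x + b (x ∘ Equiv.swap i j) = 0 := by
  have h := (toAlternating hb).map_swap x hij
  change b (x ∘ Equiv.swap i j) = - b x at h
  rw [h, add_neg_cancel]

lemma subsetBracket_skew (hb : IsSkewMultilinear K b) (k : ℕ) :
    IsSkewMultilinear K (subsetBracket b N k) := by
  refine ⟨fun x i u v => ?_, fun x i c u => ?_, fun x i j hij hx => ?_⟩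
  · simp only [subsetBracket_update, map_add, puncturedBracket_add hb]
    cases k <;> simp only [shiftSeq] <;> abel
  · simp only [subsetBracket_update, map_smul, puncturedBracket_smul hb]
    cases k <;> simp only [shiftSeq, smul_add, smul_zero]
  · have hσx : ∀ a, x (Equiv.swap i j a) = x a := by
      intro a
      by_cases hi : a = i
      · subst hi; rw [Equiv.swap_apply_left, hx]
      · by_cases hj : a = j
        · subst hj; rw [Equiv.swap_apply_right, hx]
        · rw [Equiv.swap_apply_of_ne_of_ne hi hj]
    have hmem : ∀ (S : Finset (Fin m)) a,
        a ∈ S.map (Equiv.swap i j).toEmbedding ↔ Equiv.swap i j a ∈ S := by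
      intro S a
      rw [Finset.mem_map_equiv, Equiv.symm_swap]
    have happ : ∀ S : Finset (Fin m), applyOn N (S.map (Equiv.swap i j).toEmbedding) x
        = applyOn N S x ∘ Equiv.swap i j := by
      intro S
      ext a
      simp only [applyOn, hmem, Function.comp, hσx]
    refine Finset.sum_involution (fun S _ => S.map (Equiv.swap i j).toEmbedding) ?_ ?_ ?_ ?_
    · intro S _
      rw [happ]
      exact hb.map_swap _ hij
    · -- a subset fixed by the transposition contains both or neither of `i`, `j`
      intro S _ hne heq
      refine hne (hb.2.2 _ i j hij ?_)
      have := hmem S i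
      rw [heq, Equiv.swap_apply_left] at this
      simp only [applyOn, this, hx]
    · intro S hS
      rw [Finset.mem_powersetCard] at hS ⊢
      exact ⟨Finset.subset_univ _, by rw [Finset.card_map]; exact hS.2⟩
    · intro S _
      ext a
      rw [hmem, hmem, Equiv.swap_apply_self]

lemma nestedBracket_succ (k : ℕ) (x : Fin m → g) :
    nestedBracket b N (k + 1) x = subsetBracket b N (k + 1) x - N (nestedBracket b N k x) := rfl

lemma nestedBracket_skew (hb : IsSkewMultilinear K b) (k : ℕ) :
    IsSkewMultilinear K (nestedBracket b N k) := by
  induction k with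
  | zero => exact hb
  | succ k ih =>
    have hA := subsetBracket_skew (N := N) hb (k + 1)
    refine ⟨fun x i u v => ?_, fun x i c u => ?_, fun x i j hij hx => ?_⟩
    · simp only [nestedBracket_succ, hA.1, ih.1, map_add]; abel
    · simp only [nestedBracket_succ, hA.2.1, ih.2.1, map_smul, smul_sub]
    · rw [nestedBracket_succ, hA.2.2 x i j hij hx, ih.2.2 x i j hij hx, map_zero, sub_zero]

/-! ### The Filippov identity, coefficient by coefficient -/

/-- Inserting `∑ t^j B_j(w)` into position `l` of `b((1 + tN)·, …, (1 + tN)·)` yields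
`b((1 + tN)w₁, …, (1 + tN)w_m)` in that position, since `(1 + tN) ∑ t^j B_j = ∑ t^j A_j`. -/
lemma sum_subsetBracket_nested (hb : IsSkewMultilinear K b) (l : Fin m) (y w : Fin m → g)
    (k : ℕ) :
    ∑ p ∈ Finset.HasAntidiagonal.antidiagonal k,
        subsetBracket b N p.1 (Function.update y l (nestedBracket b N p.2 w))
      = ∑ p ∈ Finset.HasAntidiagonal.antidiagonal k, puncturedBracket b N l p.1 y (subsetBracket b N p.2 w) := by
  simp only [subsetBracket_update]
  simp only [subsetBracket_eq, puncturedBracket_add hb, Finset.sum_add_distrib]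
  congr 1
  rw [sum_shift_comm (fun i j => puncturedBracket b N l i y (N (nestedBracket b N j w)))]
  refine Finset.sum_congr rfl fun p _ => ?_
  exact (map_shiftSeq (AddMonoidHom.mk' (puncturedBracket b N l p.1 y)
    (puncturedBracket_add hb l p.1 y)) _ _).symm

end Arity

variable {n : ℕ} {b : (Fin (n + 1) → g) → g} {N : Module.End K g}

lemma snoc_eq_update (x : Fin n → g) (z : g) :
    (Fin.snoc x z : Fin (n + 1) → g)
      = Function.update (Fin.snoc x 0 : Fin (n + 1) → g) (Fin.last n) z := by
  rw [Fin.update_snoc_last]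

/-- The Filippov identity with the outer arguments given by an `(n+1)`-tuple whose last entry
is overwritten. -/
lemma filippov_update (hb : IsFilippov b) (x y : Fin (n + 1) → g) :
    b (Function.update x (Fin.last n) (b y))
      = ∑ l, b (Function.update y l (b (Function.update x (Fin.last n) (y l)))) := by
  have h := hb (Fin.init x) y
  have hx : ∀ z, (Fin.snoc (Fin.init x) z : Fin (n + 1) → g)
      = Function.update x (Fin.last n) z := by
    intro z
    rw [← Fin.update_snoc_last (x := x (Fin.last n)), Fin.snoc_init_self]
  simpa only [hx] using h

lemma bracket_update_sum {m : ℕ} {b : (Fin m → g) → g} (hb : IsSkewMultilinear K b) {ι : Type*}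
    (y : Fin m → g) (l : Fin m) (s : Finset ι) (f : ι → g) :
    b (Function.update y l (∑ i ∈ s, f i)) = ∑ i ∈ s, b (Function.update y l (f i)) :=
  map_sum (AddMonoidHom.mk' (fun z => b (Function.update y l z)) (hb.1 y l)) f s

/-- The coefficient of `t^k` in the Filippov identity for `b` evaluated at the vectors
`(1 + tN)x_i` and `(1 + tN)y_i`. -/
lemma sum_subsetBracket_filippov (hb : IsNLieBracket K b) (x y : Fin (n + 1) → g) (k : ℕ) :
    ∑ p ∈ Finset.HasAntidiagonal.antidiagonal k,
        puncturedBracket b N (Fin.last n) p.1 x (subsetBracket b N p.2 y)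
      = ∑ l, ∑ p ∈ Finset.HasAntidiagonal.antidiagonal k,
        puncturedBracket b N l p.1 y
          (subsetBracket b N p.2 (Function.update x (Fin.last n) (y l))) := by
  -- coefficient of `tⁱ` from the `x`-entries and `tʲ` from the `y`-entries other than `y l`
  let D : Fin (n + 1) → g → ℕ → ℕ → g := fun l z i j =>
    puncturedBracket b N l j y (puncturedBracket b N (Fin.last n) i x z)
  have hleft : ∀ i j, puncturedBracket b N (Fin.last n) i x (subsetBracket b N j y)
      = ∑ l, (D l (y l) i j + shiftSeq (fun j' => D l (N (y l)) i j') j) := by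
    intro i j
    calc puncturedBracket b N (Fin.last n) i x (subsetBracket b N j y)
        = ∑ S ∈ Finset.powersetCard i ((Finset.univ : Finset (Fin (n + 1))).erase (Fin.last n)),
          ∑ T ∈ Finset.powersetCard j (Finset.univ : Finset (Fin (n + 1))), ∑ l,
            b (Function.update (applyOn N T y) l
              (b (Function.update (applyOn N S x) (Fin.last n) (applyOn N T y l)))) := by
          simp only [puncturedBracket, subsetBracket, bracket_update_sum hb.1,
            filippov_update hb.2]
      _ = ∑ l, ∑ T ∈ Finset.powersetCard j (Finset.univ : Finset (Fin (n + 1))),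
            b (Function.update (applyOn N T y) l
              (puncturedBracket b N (Fin.last n) i x (applyOn N T y l))) := by
          simp only [puncturedBracket, bracket_update_sum hb.1]
          rw [Finset.sum_comm, Finset.sum_comm (s := Finset.univ)]
          exact Finset.sum_congr rfl fun T _ => Finset.sum_comm
      _ = _ := by
          refine Finset.sum_congr rfl fun l _ => ?_
          rw [sum_powersetCard_split l]
          congr 1
          · refine Finset.sum_congr rfl fun S hS => ?_
            have : applyOn N S y l = y l := if_neg (notMem_of_mem_erase hS)
            rw [this]
          · congr 1
            funext j'
            refine Finset.sum_congr rfl fun S hS => ?_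
            have h1 : applyOn N (insert l S) y l = N (y l) := if_pos (Finset.mem_insert_self _ _)
            have h2 : ∀ z, Function.update (applyOn N (insert l S) y) l z
                = Function.update (applyOn N S y) l z := by
              intro z
              ext a
              by_cases ha : a = l
              · subst ha; simp
              · simp [ha, applyOn]
            rw [h1, h2]
  have hright : ∀ l i j, puncturedBracket b N l j y
        (subsetBracket b N i (Function.update x (Fin.last n) (y l)))
      = D l (y l) i j + shiftSeq (fun i' => D l (N (y l)) i' j) i := by
    intro l i j
    rw [subsetBracket_update, puncturedBracket_add hb.1]
    congr 1
    exact map_shiftSeq (AddMonoidHom.mk' (puncturedBracket b N l j y)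
      (puncturedBracket_add hb.1 l j y)) _ _
  simp only [hleft]
  rw [Finset.sum_comm]
  refine Finset.sum_congr rfl fun l _ => ?_
  rw [← Finset.Nat.sum_antidiagonal_swap (f := fun p : ℕ × ℕ => puncturedBracket b N l p.1 y
    (subsetBracket b N p.2 (Function.update x (Fin.last n) (y l))))]
  simp only [Prod.fst_swap, Prod.snd_swap, hright, Finset.sum_add_distrib]
  congr 1
  exact (sum_shift_comm (D l (N (y l))) k).symm

/-- Every coefficient of the Filippov identity for `∑ t^j B_j` holds. -/
lemma nested_filippov (hb : IsNLieBracket K b) (x y : Fin (n + 1) → g) (k : ℕ) :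
    ∑ p ∈ Finset.HasAntidiagonal.antidiagonal k,
        nestedBracket b N p.1 (Function.update x (Fin.last n) (nestedBracket b N p.2 y))
      = ∑ l, ∑ p ∈ Finset.HasAntidiagonal.antidiagonal k, nestedBracket b N p.1 (Function.update y l
          (nestedBracket b N p.2 (Function.update x (Fin.last n) (y l)))) := by
  have h2 : ∀ k l, ∑ p ∈ Finset.HasAntidiagonal.antidiagonal k, shiftSeq (fun i => N (nestedBracket b N i
      (Function.update y l (nestedBracket b N p.2
        (Function.update x (Fin.last n) (y l)))))) p.1 = _ := fun k l =>
    sum_shift_left (fun i j => N (nestedBracket b N i (Function.update y l (nestedBracket b N j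
        (Function.update x (Fin.last n) (y l)))))) k
  -- `L_k + N L_{k-1} = R_k + N R_{k-1}` for the two sides `L`, `R`
  have key : ∀ k, _ := fun k => sum_subsetBracket_filippov (N := N) hb x y k
  simp only [← sum_subsetBracket_nested hb.1] at key
  simp only [subsetBracket_eq (b := b) (N := N), Finset.sum_add_distrib] at key
  simp only [h2, sum_shiftSeq, sum_shift_left (fun i j => N (nestedBracket b N i
    (Function.update x (Fin.last n) (nestedBracket b N j y))))] at key
  induction k with
  | zero => simpa [shiftSeq] using key 0
  | succ k ih =>
    have hk := key (k + 1)
    have hNih := congrArg N ih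
    simp only [map_sum] at hNih
    simp only [shiftSeq] at hk
    rw [hNih] at hk
    exact add_right_cancel hk

/-! ### The Nijenhuis condition and the top coefficient -/

/-- The Nijenhuis condition is `B_{n+1} = A_{n+1} - N B_n = 0`; beyond that `A_j` is an empty sum. -/
lemma nestedBracket_eq_zero (hN : IsNijenhuis b N) (j : ℕ) (x : Fin (n + 1) → g) :
    nestedBracket b N (n + 1 + j) x = 0 := by
  induction j with
  | zero =>
    have : Finset.powersetCard (n + 1) (Finset.univ : Finset (Fin (n + 1))) = {Finset.univ} := by
      simpa using Finset.powersetCard_self (Finset.univ : Finset (Fin (n + 1)))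
    rw [add_zero, nestedBracket_succ, ← hN x, subsetBracket, this, Finset.sum_singleton]
    have h : applyOn N Finset.univ x = fun i => N (x i) := by ext i; simp [applyOn]
    rw [h, sub_self]
  | succ j ih =>
    rw [← add_assoc, nestedBracket_succ, ih, subsetBracket, Finset.powersetCard_eq_empty.2]
    · simp
    · rw [Finset.card_fin]; omega

/-- The Cauchy product of two polynomials of degree at most `n` has the product of the top
coefficients as its coefficient in degree `2n`. -/
lemma sum_antidiagonal_top (D : ℕ → ℕ → g) (h1 : ∀ i j, n < i → D i j = 0)
    (h2 : ∀ i j, n < j → D i j = 0) :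
    ∑ p ∈ Finset.HasAntidiagonal.antidiagonal (n + n), D p.1 p.2 = D n n := by
  rw [Finset.sum_eq_single (n, n)]
  · intro p hp hne
    rw [Finset.HasAntidiagonal.mem_antidiagonal] at hp
    rcases lt_trichotomy p.1 n with h | h | h
    · exact h2 _ _ (by omega)
    · exact absurd (Prod.ext h (by simp; omega)) hne
    · exact h1 _ _ h
  · simp

end NijenhuisProof

/-- If `N` is a Nijenhuis operator on the `(n+1)`-Lie algebra `(g, b)`,
then `[·,…,·]_N^n` is again an `(n+1)`-Lie algebra bracket on `g`, and `N` is a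
homomorphism from `(g, [·,…,·]_N^n)` to `(g, b)`. -/
theorem nijenhuis_deformed_bracket_is_nLie
    {K : Type*} [Field K] {g : Type*} [AddCommGroup g] [Module K g]
    {n : ℕ} (b : (Fin (n + 1) → g) → g) (hb : IsNLieBracket K b)
    (N : Module.End K g) (hN : IsNijenhuis b N) :
    IsNLieBracket K (nestedBracket b N n) ∧
    (∀ x : Fin (n + 1) → g, N (nestedBracket b N n x) = b (fun i => N (x i))) := by
  have hskew := fun k => nestedBracket_skew (N := N) hb.1 k
  have hzero : ∀ i, n < i → ∀ x, nestedBracket b N i x = 0 := by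
    intro i hi x
    obtain ⟨j, rfl⟩ := Nat.exists_eq_add_of_le (Nat.succ_le_of_lt hi)
    exact nestedBracket_eq_zero hN j x
  have hupd : ∀ i (x : Fin (n + 1) → g) l, nestedBracket b N i (Function.update x l 0) = 0 := by
    intro i x l
    simpa using (hskew i).2.1 x l 0 0
  refine ⟨⟨hskew n, fun x y => ?_⟩, fun x => (hN x).symm⟩
  have h := nested_filippov (N := N) hb (Fin.snoc x 0) y (n + n)
  have htop : ∀ (l : Fin (n + 1)) (u w : Fin (n + 1) → g), ∑ p ∈ Finset.HasAntidiagonal.antidiagonal (n + n),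
      nestedBracket b N p.1 (Function.update u l (nestedBracket b N p.2 w))
        = nestedBracket b N n (Function.update u l (nestedBracket b N n w)) := fun l u w =>
    sum_antidiagonal_top
      (fun i j => nestedBracket b N i (Function.update u l (nestedBracket b N j w)))
      (fun i j hi => hzero i hi _) (fun i j hj => by simp only [hzero j hj, hupd])
  rw [htop] at h
  simpa only [htop, ← snoc_eq_update] using h
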